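/- arXiv:2312.12293 — 2 statements merged into one kernel-verified Lean document; each statement's English description precedes it below -/
import Mathlib

section
/- Let R be a ring (associative, with identity) and let 0 → M_1 → M_2 → M_3 → 0 be a short exact sequence of left R-modules. If any two of the modules M_1, M_2, M_3 are of type FP, then the third one is also of type FP. -/
universe u v

/-- An `R`-module `M` is of type `FP` if it admits a finite-length resolution
`0 → P_n → ⋯ → P_1 → P_0 → M → 0` by finitely generated projective `R`-modules.
(The modules `P_i` for `i > n` are required to be trivial.) -/
def IsFPModule (R : Type u) [Ring R] (M : Type v) [AddCommGroup M] [Module R M] : Prop :=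
  ∃ (n : ℕ) (P : ℕ → ModuleCat.{v} R) (d : ∀ i : ℕ, P (i + 1) →ₗ[R] P i)
    (e : P 0 →ₗ[R] M),
    (∀ i, Module.Projective R (P i)) ∧ (∀ i, Module.Finite R (P i)) ∧
    Function.Surjective e ∧ Function.Exact (d 0) e ∧
    (∀ i, Function.Exact (d (i + 1)) (d i)) ∧ (∀ i, n < i → Subsingleton (P i))

/-!
Prolonging and truncating resolutions shows that the modules of type `FP` form the smallest class
that contains the zero modules and contains `M` whenever it contains the kernel of a surjection
onto `M` from a finitely generated projective module. Below, a cover is such a surjection.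

Let `u : B → C` be surjective with `B` of type `FP`, and let `P → B` be a cover whose kernel `K` is
of type `FP`. Then the kernel of `P → C` is an extension of `ker u` by `K`, so `C` is of type `FP`
as soon as extensions of `ker u` by modules of type `FP` are. Now let `N` be an extension of `M` by
a module `K` of type `FP`, and let `Q → M` be a cover with kernel `L`. Lifting `Q → M` to `N`
presents `N` as the quotient of `K × Q` by `L`, so the statement about extensions passes from `L`
to `M`. By induction, this settles extensions and quotients.

For kernels, let `P → M₂` be a cover with kernel `K` of type `FP`. The kernel `N` of `P → M₃`
surjects onto `M₁` with kernel `K`, so it suffices that `N` is of type `FP`. As in Schanuel's lemma,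
for a cover `Q → M₃` with kernel `L` of type `FP`, `N × Q` is an extension of `P` by `L`, and `N` is
its quotient by `Q`.
-/

open Function LinearMap

section Exact

variable {R M N L : Type*} [Ring R] [AddCommGroup M] [Module R M] [AddCommGroup N] [Module R N]
  [AddCommGroup L] [Module R L]

/-- The left term of a short exact sequence, identified with the kernel of the right map. -/
noncomputable def equivKerOfExact {f : M →ₗ[R] N} {g : N →ₗ[R] L} (hf : Injective f)
    (hfg : Exact f g) : M ≃ₗ[R] ker g :=
  (LinearEquiv.ofInjective f hf).trans (LinearEquiv.ofEq _ _ hfg.linearMap_ker_eq.symm)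

/-- The map `ker (g ∘ f) → ker g` induced by `f`. -/
def kerCompRestrict (f : M →ₗ[R] N) (g : N →ₗ[R] L) : ker (g ∘ₗ f) →ₗ[R] ker g :=
  f.restrict fun _ hx ↦ hx

theorem kerCompRestrict_surjective {f : M →ₗ[R] N} (hf : Surjective f) (g : N →ₗ[R] L) :
    Surjective (kerCompRestrict f g) := by
  rintro ⟨y, hy⟩
  obtain ⟨x, rfl⟩ := hf y
  exact ⟨⟨x, hy⟩, rfl⟩

theorem exact_inclusion_kerCompRestrict (f : M →ₗ[R] N) (g : N →ₗ[R] L) :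
    Exact (Submodule.inclusion (ker_le_ker_comp f g)) (kerCompRestrict f g) := by
  rintro ⟨x, hx⟩
  constructor
  · exact fun h ↦ ⟨⟨x, congrArg Subtype.val h⟩, rfl⟩
  · rintro ⟨y, hy⟩
    rw [← hy]
    exact Subtype.ext y.2

theorem exact_kerCompRestrict_prod_coprod (s : M →ₗ[R] N) (g : N →ₗ[R] L) :
    Exact ((kerCompRestrict s g).prod (ker (g ∘ₗ s)).subtype)
      ((-(ker g).subtype).coprod s) := by
  rintro ⟨⟨y, hy⟩, x⟩
  have hyx : ((-(ker g).subtype).coprod s) (⟨y, hy⟩, x) = 0 ↔ s x = y := by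
    simp [neg_add_eq_zero, eq_comm (a := y)]
  rw [hyx]
  constructor
  · rintro rfl
    exact ⟨⟨x, hy⟩, rfl⟩
  · rintro ⟨z, hz⟩
    obtain ⟨hzy, rfl⟩ := Prod.ext_iff.1 hz
    exact congrArg Subtype.val hzy

theorem kerCompRestrict_prod_injective (s : M →ₗ[R] N) (g : N →ₗ[R] L) :
    Injective ((kerCompRestrict s g).prod (ker (g ∘ₗ s)).subtype) :=
  fun _ _ h ↦ Subtype.ext (congrArg Prod.snd h)

theorem neg_subtype_coprod_surjective {s : M →ₗ[R] N} {g : N →ₗ[R] L}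
    (h : Surjective (g ∘ₗ s)) : Surjective ((-(ker g).subtype).coprod s) := by
  intro y
  obtain ⟨x, hx⟩ := h (g y)
  exact ⟨(⟨s x - y, by simpa [sub_eq_zero] using hx⟩, x), by simp⟩

theorem exact_inl_comp_subtype_prodMap_id (f : M →ₗ[R] N) :
    Exact (inl R M L ∘ₗ (ker f).subtype) (f.prodMap (LinearMap.id : L →ₗ[R] L)) := by
  rintro ⟨x, y⟩
  simp [Prod.ext_iff, eq_comm]

end Exact

namespace IsFPModule

variable {R : Type u} [Ring R] {M N K P : Type v} [AddCommGroup M] [Module R M]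
  [AddCommGroup N] [Module R N] [AddCommGroup K] [Module R K] [AddCommGroup P] [Module R P]

theorem of_linearEquiv (φ : M ≃ₗ[R] N) (hM : IsFPModule R M) : IsFPModule R N := by
  obtain ⟨n, P, d, e, hproj, hfin, he, hde, hd, hn⟩ := hM
  exact ⟨n, P, d, φ.toLinearMap ∘ₗ e, hproj, hfin, φ.surjective.comp he,
    φ.injective.comp_exact_iff_exact.2 hde, hd, hn⟩

theorem ker_of_exact {f : K →ₗ[R] M} {g : M →ₗ[R] N} (hf : Injective f) (hfg : Exact f g)
    (hK : IsFPModule R K) : IsFPModule R (ker g) :=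
  hK.of_linearEquiv (equivKerOfExact hf hfg)

variable (R M) in
theorem of_subsingleton [Subsingleton M] : IsFPModule R M :=
  ⟨0, fun _ ↦ ModuleCat.of R M, fun _ ↦ 0, LinearMap.id, fun _ ↦ inferInstance,
    fun _ ↦ inferInstance, surjective_id, fun _ ↦ by simp [Subsingleton.elim _ (0 : M)],
    fun _ _ ↦ by simp [Subsingleton.elim _ (0 : M)], fun _ _ ↦ inferInstance⟩

theorem of_exact_of_projective [Module.Finite R P] [Module.Projective R P] {i : K →ₗ[R] P}
    {p : P →ₗ[R] M} (hi : Injective i) (hp : Surjective p) (hip : Exact i p)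
    (hK : IsFPModule R K) : IsFPModule R M := by
  obtain ⟨n, Q, d, e, hproj, hfin, he, hde, hd, hn⟩ := hK
  let Q' : ℕ → ModuleCat.{v} R
    | 0 => ModuleCat.of R P
    | k + 1 => Q k
  let d' : ∀ k, Q' (k + 1) →ₗ[R] Q' k
    | 0 => i ∘ₗ e
    | k + 1 => d k
  refine ⟨n + 1, Q', d', p, ?_, ?_, hp, he.comp_exact_iff_exact.2 hip, ?_, ?_⟩
  · rintro (_ | k)
    exacts [‹Module.Projective R P›, hproj k]
  · rintro (_ | k)
    exacts [‹Module.Finite R P›, hfin k]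
  · rintro (_ | k)
    exacts [hi.comp_exact_iff_exact.2 hde, hd k]
  · rintro (_ | k) hk
    exacts [absurd hk (Nat.not_lt_zero _), hn k (Nat.lt_of_succ_lt_succ hk)]

theorem of_ker [Module.Finite R P] [Module.Projective R P] {p : P →ₗ[R] M} (hp : Surjective p)
    (hK : IsFPModule R (ker p)) : IsFPModule R M :=
  of_exact_of_projective (ker p).injective_subtype hp (exact_subtype_ker_map p) hK

variable (R M) in
theorem of_finite_of_projective [Module.Finite R M] [Module.Projective R M] : IsFPModule R M :=
  have : Subsingleton (ker (LinearMap.id : M →ₗ[R] M)) := by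
    rw [ker_id]
    infer_instance
  of_ker (p := LinearMap.id) surjective_id (of_subsingleton R _)

theorem induction {motive : ∀ (M : Type v) [AddCommGroup M] [Module R M], Prop}
    (subsingleton : ∀ (M : Type v) [AddCommGroup M] [Module R M] [Subsingleton M], motive M)
    (of_ker : ∀ {P M : Type v} [AddCommGroup P] [Module R P] [AddCommGroup M] [Module R M]
      [Module.Finite R P] [Module.Projective R P] (p : P →ₗ[R] M), Surjective p →
      IsFPModule R (ker p) → motive (ker p) → motive M)
    (hM : IsFPModule R M) : motive M := by
  obtain ⟨n, P, d, e, hproj, hfin, he, hde, hd, hn⟩ := hM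
  replace hn : ∀ i, n + 1 ≤ i → Subsingleton (P i) := hn
  generalize n + 1 = m at hn
  induction m generalizing M P with
  | zero =>
    have := hn 0 le_rfl
    have := he.subsingleton
    exact subsingleton M
  | succ m ih =>
    let r : P 1 →ₗ[R] ker e := (d 0).codRestrict (ker e) hde.apply_apply_eq_zero
    have hr : Surjective r := by
      rintro ⟨x, hx⟩
      obtain ⟨y, rfl⟩ := (hde x).1 hx
      exact ⟨y, rfl⟩
    have hdr : Exact (d 1) r := (ker e).injective_subtype.comp_exact_iff_exact.1 (hd 0)
    have hn' (i : ℕ) (hi : m ≤ i) : Subsingleton (P (i + 1)) := hn (i + 1) (Nat.succ_le_succ hi)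
    have hker : IsFPModule R (ker e) :=
      ⟨m, fun i ↦ P (i + 1), fun i ↦ d (i + 1), r, fun _ ↦ hproj _, fun _ ↦ hfin _, hr, hdr,
        fun _ ↦ hd _, fun i hi ↦ hn' i hi.le⟩
    have := hproj 0
    have := hfin 0
    exact of_ker e he hker (ih (fun i ↦ P (i + 1)) (fun i ↦ d (i + 1)) r (fun _ ↦ hproj _)
      (fun _ ↦ hfin _) hr hdr (fun _ ↦ hd _) hn')

theorem exists_finite_projective_surjective (hM : IsFPModule R M) :
    ∃ (P : ModuleCat.{v} R) (p : P →ₗ[R] M), Module.Finite R P ∧ Module.Projective R P ∧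
      Surjective p ∧ IsFPModule R (ker p) := by
  refine hM.induction (motive := fun M _ _ ↦ ∃ (P : ModuleCat.{v} R) (p : P →ₗ[R] M),
    Module.Finite R P ∧ Module.Projective R P ∧ Surjective p ∧ IsFPModule R (ker p)) ?_ ?_
  · intro M _ _ _
    exact ⟨ModuleCat.of R M, LinearMap.id, inferInstance, inferInstance, surjective_id,
      of_subsingleton R _⟩
  · intro P M _ _ _ _ _ _ p hp hker _
    exact ⟨ModuleCat.of R P, p, inferInstance, inferInstance, hp, hker⟩

theorem prod_of_projective [Module.Finite R P] [Module.Projective R P] (hM : IsFPModule R M) :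
    IsFPModule R (M × P) := by
  obtain ⟨Q, q, _, _, hq, hker⟩ := hM.exists_finite_projective_surjective
  exact of_exact_of_projective (inl_injective.comp (ker q).injective_subtype)
    (hq.prodMap surjective_id) (exact_inl_comp_subtype_prodMap_id q) hker

end IsFPModule

/-- Every extension of `M` by a module of type `FP` is of type `FP`. This is the property of `M`
that is proved by induction for `M` of type `FP`; an extension of `M` is encoded as a surjection
onto `M`. -/
def ExtensionsAreFP (R : Type u) [Ring R] (M : Type v) [AddCommGroup M] [Module R M] : Prop :=
  ∀ (N : Type v) [AddCommGroup N] [Module R N] (g : N →ₗ[R] M), Surjective g →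
    IsFPModule R (ker g) → IsFPModule R N

namespace ExtensionsAreFP

variable {R : Type u} [Ring R] {M N P : Type v} [AddCommGroup M] [Module R M]
  [AddCommGroup N] [Module R N] [AddCommGroup P] [Module R P]

theorem of_linearEquiv (φ : M ≃ₗ[R] N) (hM : ExtensionsAreFP R M) : ExtensionsAreFP R N := by
  intro E _ _ g hg hker
  refine hM E (φ.symm.toLinearMap ∘ₗ g) (φ.symm.surjective.comp hg) ?_
  rwa [LinearEquiv.ker_comp]

variable (R M) in
theorem of_subsingleton [Subsingleton M] : ExtensionsAreFP R M := by
  intro E _ _ g _ hker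
  have hg : ker g = ⊤ := ker_eq_top.2 (Subsingleton.elim g 0)
  exact hker.of_linearEquiv (LinearEquiv.ofTop (ker g) hg)

theorem isFPModule_of_surjective {u : M →ₗ[R] N} (hu : Surjective u)
    (hker : ExtensionsAreFP R (ker u)) (hM : IsFPModule R M) : IsFPModule R N := by
  obtain ⟨P, p, _, _, hp, hK⟩ := hM.exists_finite_projective_surjective
  have hup : IsFPModule R (ker (u ∘ₗ p)) :=
    hker _ (kerCompRestrict p u) (kerCompRestrict_surjective hp u)
      (hK.ker_of_exact (Submodule.inclusion_injective _) (exact_inclusion_kerCompRestrict p u))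
  exact .of_ker (p := u ∘ₗ p) (hu.comp hp) hup

theorem of_ker [Module.Finite R P] [Module.Projective R P] {p : P →ₗ[R] M} (hp : Surjective p)
    (hker : ExtensionsAreFP R (ker p)) : ExtensionsAreFP R M := by
  intro E _ _ g hg hK
  obtain ⟨s, rfl⟩ := Module.projective_lifting_property g p hg
  have hker' : ExtensionsAreFP R (ker ((-(ker g).subtype).coprod s)) :=
    hker.of_linearEquiv (equivKerOfExact (kerCompRestrict_prod_injective s g)
      (exact_kerCompRestrict_prod_coprod s g))
  exact hker'.isFPModule_of_surjective (neg_subtype_coprod_surjective hp)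
    hK.prod_of_projective

end ExtensionsAreFP

namespace IsFPModule

variable {R : Type u} [Ring R]

theorem extensionsAreFP {M : Type v} [AddCommGroup M] [Module R M] (hM : IsFPModule R M) :
    ExtensionsAreFP R M :=
  hM.induction (motive := fun M _ _ ↦ ExtensionsAreFP R M)
    (fun M _ _ _ ↦ .of_subsingleton R M) (fun _ hp _ ih ↦ .of_ker hp ih)

variable {M₁ M₂ M₃ : Type v} [AddCommGroup M₁] [Module R M₁] [AddCommGroup M₂] [Module R M₂]
  [AddCommGroup M₃] [Module R M₃] {f : M₁ →ₗ[R] M₂} {g : M₂ →ₗ[R] M₃}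

theorem middle_of_exact (hf : Injective f) (hg : Surjective g) (hfg : Exact f g)
    (h₁ : IsFPModule R M₁) (h₃ : IsFPModule R M₃) : IsFPModule R M₂ :=
  h₃.extensionsAreFP M₂ g hg (h₁.ker_of_exact hf hfg)

theorem right_of_exact (hf : Injective f) (hg : Surjective g) (hfg : Exact f g)
    (h₁ : IsFPModule R M₁) (h₂ : IsFPModule R M₂) : IsFPModule R M₃ :=
  (h₁.ker_of_exact hf hfg).extensionsAreFP.isFPModule_of_surjective hg h₂

theorem ker_of_projective {P M : Type v} [AddCommGroup P] [Module R P] [AddCommGroup M]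
    [Module R M] [Module.Finite R P] [Module.Projective R P] {p : P →ₗ[R] M} (hp : Surjective p)
    (hM : IsFPModule R M) : IsFPModule R (ker p) := by
  obtain ⟨Q, q, _, _, hq, hker⟩ := hM.exists_finite_projective_surjective
  obtain ⟨s, rfl⟩ := Module.projective_lifting_property p q hp
  have hprod : IsFPModule R (ker p × Q) :=
    middle_of_exact (kerCompRestrict_prod_injective s p) (neg_subtype_coprod_surjective hq)
      (exact_kerCompRestrict_prod_coprod s p) hker (of_finite_of_projective R P)
  exact right_of_exact inr_injective fst_surjective .inr_fst (of_finite_of_projective R Q) hprod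

theorem left_of_exact (hf : Injective f) (hg : Surjective g) (hfg : Exact f g)
    (h₂ : IsFPModule R M₂) (h₃ : IsFPModule R M₃) : IsFPModule R M₁ := by
  obtain ⟨P, p, _, _, hp, hker⟩ := h₂.exists_finite_projective_surjective
  have hgp : IsFPModule R (ker (g ∘ₗ p)) := h₃.ker_of_projective (hg.comp hp)
  have hkerg : IsFPModule R (ker g) :=
    right_of_exact (Submodule.inclusion_injective _) (kerCompRestrict_surjective hp g)
      (exact_inclusion_kerCompRestrict p g) hker hgp
  exact hkerg.of_linearEquiv (equivKerOfExact hf hfg).symm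

end IsFPModule

/-- In a short exact sequence of `R`-modules, if two of the three modules are of type `FP`,
then so is the third. -/
theorem stmt9 (R : Type u) [Ring R] (M₁ M₂ M₃ : Type v)
    [AddCommGroup M₁] [Module R M₁] [AddCommGroup M₂] [Module R M₂]
    [AddCommGroup M₃] [Module R M₃]
    (f : M₁ →ₗ[R] M₂) (g : M₂ →ₗ[R] M₃)
    (hf : Function.Injective f) (hg : Function.Surjective g) (hfg : Function.Exact f g) :
    (IsFPModule R M₁ → IsFPModule R M₂ → IsFPModule R M₃) ∧
    (IsFPModule R M₁ → IsFPModule R M₃ → IsFPModule R M₂) ∧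
    (IsFPModule R M₂ → IsFPModule R M₃ → IsFPModule R M₁) := by
  exact ⟨.right_of_exact hf hg hfg, .middle_of_exact hf hg hfg, .left_of_exact hf hg hfg⟩
end

section
/- Let F be a free group of rank k with basis x_1, …, x_k, let u ∈ F, and let D = F *_u F be the double of F along u. Then for every finite group Q, the number of group homomorphisms from D to Q equals Σ_{a ∈ Q} |u_Q^{-1}(a)|^2, where u_Q : Q^k → Q is the word map of u. -/
/-- The relator `u(x₁,…,x_k)·u(x̄₁,…,x̄_k)⁻¹` presenting the double `F *_u F`. -/
def doubleRel {k : ℕ} (u : FreeGroup (Fin k)) : FreeGroup (Fin k ⊕ Fin k) :=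
  FreeGroup.map Sum.inl u * (FreeGroup.map Sum.inr u)⁻¹

/-- The double `F *_u F` of the free group `F` of rank `k` along the word `u`. -/
def Double {k : ℕ} (u : FreeGroup (Fin k)) : Type :=
  PresentedGroup ({doubleRel u} : Set (FreeGroup (Fin k ⊕ Fin k)))

noncomputable instance {k : ℕ} (u : FreeGroup (Fin k)) : Group (Double u) := by
  unfold Double; infer_instance

section Presentation

variable {α β G : Type*} [Group G]

theorem freeGroup_lift_map (f : α → β) (g : β → G) (w : FreeGroup α) :
    FreeGroup.lift g (FreeGroup.map f w) = FreeGroup.lift (g ∘ f) w :=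
  FreeGroup.lift_unique ((FreeGroup.lift g).comp (FreeGroup.map f)) fun x => by simp

theorem lift_comp_presentedGroup_of {rels : Set (FreeGroup α)} (φ : PresentedGroup rels →* G) :
    FreeGroup.lift (φ ∘ PresentedGroup.of) = φ.comp (PresentedGroup.mk rels) :=
  FreeGroup.ext_hom _ _ fun _ => FreeGroup.lift_apply_of

/-- The universal property of a presentation, as a bijection: homomorphisms out of the presented
group are the assignments of the generators under which every relator evaluates to `1`. -/
def presentedGroupHomEquiv (rels : Set (FreeGroup α)) :
    (PresentedGroup rels →* G) ≃ {f : α → G // ∀ r ∈ rels, FreeGroup.lift f r = 1} where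
  toFun φ := ⟨φ ∘ PresentedGroup.of, fun r hr => by
    rw [lift_comp_presentedGroup_of, MonoidHom.comp_apply, PresentedGroup.one_of_mem hr, map_one]⟩
  invFun f := PresentedGroup.toGroup f.2
  left_inv φ := PresentedGroup.ext fun _ => PresentedGroup.toGroup.of _
  right_inv f := Subtype.ext <| funext fun _ => PresentedGroup.toGroup.of f.2

end Presentation

section Pullback

variable {X Y A : Type*}

/-- The fibre product of two maps to `A`, decomposed according to the common value in `A`. -/
def pullbackEquivSigmaFiber (f : X → A) (g : Y → A) :
    Function.Pullback f g ≃ Σ a, {x // f x = a} × {y // g y = a} where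
  toFun p := ⟨g p.1.2, ⟨p.1.1, p.2⟩, ⟨p.1.2, rfl⟩⟩
  invFun s := ⟨(s.2.1, s.2.2), s.2.1.2.trans s.2.2.2.symm⟩
  left_inv _ := rfl
  right_inv := by
    rintro ⟨_, _, _, rfl⟩
    rfl

theorem card_pullback [Finite X] [Finite Y] [Fintype A] (f : X → A) (g : Y → A) :
    Nat.card (Function.Pullback f g) =
      ∑ a, Nat.card {x // f x = a} * Nat.card {y // g y = a} := by
  simp only [Nat.card_congr (pullbackEquivSigmaFiber f g), Nat.card_sigma, Nat.card_prod]

end Pullback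

section Double

variable {k : ℕ} (u : FreeGroup (Fin k))

theorem lift_doubleRel_eq_one_iff {G : Type*} [Group G] (g : Fin k ⊕ Fin k → G) :
    FreeGroup.lift g (doubleRel u) = 1 ↔
      FreeGroup.lift (g ∘ Sum.inl) u = FreeGroup.lift (g ∘ Sum.inr) u := by
  rw [doubleRel, map_mul, map_inv, mul_inv_eq_one, freeGroup_lift_map, freeGroup_lift_map]

/-- Homomorphisms from the double of `u` to `G` are the pairs of `k`-tuples in `G` on which the
word map of `u` takes the same value. -/
def doubleHomEquivPullback (G : Type*) [Group G] :
    (Double u →* G) ≃ Function.Pullback (fun f : Fin k → G => FreeGroup.lift f u)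
      (fun f : Fin k → G => FreeGroup.lift f u) :=
  (presentedGroupHomEquiv {doubleRel u}).trans <|
    (Equiv.sumArrowEquivProdArrow (Fin k) (Fin k) G).subtypeEquiv fun g => by
      simp only [Set.mem_singleton_iff, forall_eq]
      exact lift_doubleRel_eq_one_iff u g

end Double

/-- The number of homomorphisms from the double `F *_u F` to a finite group `Q` is
`∑_{a ∈ Q} |u_Q⁻¹(a)|²`. -/
theorem stmt10 (k : ℕ) (u : FreeGroup (Fin k)) (Q : Type) [Group Q] [Fintype Q] :
    Nat.card (Double u →* Q) =
      ∑ a : Q, (Nat.card {f : Fin k → Q // FreeGroup.lift f u = a}) ^ 2 := by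
  rw [Nat.card_congr (doubleHomEquivPullback u Q), card_pullback]
  simp only [sq]
end
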